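/- Let H be a real Hilbert space, d ≥ 1 an integer, C ⊆ H a nonempty closed convex set with ‖x − y‖ ≤ d for all x, y ∈ C, T : C → C nonexpansive with Fix(T) ≠ ∅, and G : C → C a τ-contraction (0 ≤ τ < 1). Let (λ_n) ⊆ (0,1], h : ℕ → ℕ⁺ with λ_n ≥ 1/h(n) for all n, and χ : ℕ → ℕ with λ_i ≤ 1/(n+1) for all n ∈ ℕ and all i ≥ χ(n). Suppose moreover φ₁ : (0,∞) → ℕ satisfies Σ_{i=1}^{φ₁(x)} λ_i ≥ x for all real x > 0, and φ₂ : (0,∞) → ℕ satisfies |λ_n − λ_{n+1}|/λ_{n+1}² ≤ δ for all δ > 0 and all n ≥ φ₂(δ). Let u₀ ∈ C and u_{n+1} := (1−λ_{n+1})·T(u_n) + λ_{n+1}·G(T(u_n)). Then for every ε ∈ (0,1] and every g : ℕ → ℕ there exists n ≤ Ξ(ε/6, g_c, χ, h, d, τ) + c such that ‖u_i − u_j‖ ≤ ε for all i, j ∈ [n; n + g(n)], where c := φ₁((φ₂((1−τ)²ε/(6d)) + ln(6d/ε))/(1−τ)) and g_c(m) := m + c + g(m + c). -/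

import Mathlib

open scoped RealInnerProductSpace

/-- `fM f n = max {f i : 1 ≤ i ≤ n}`. -/
def fM (f : ℕ → ℕ) (n : ℕ) : ℕ := (Finset.Icc 1 n).sup f

/-- `ftilde d f n = max {fᴹ(16·d·n²), 16·d·n²}`. -/
def ftilde (d : ℕ) (f : ℕ → ℕ) (n : ℕ) : ℕ := max (fM f (16 * d * n ^ 2)) (16 * d * n ^ 2)

/-- `fIt d nε f i = f̃^(nε^i)`, the `nε^i`-fold iterate of `f̃`. -/
def fIt (d nε : ℕ) (f : ℕ → ℕ) (i : ℕ) (k : ℕ) : ℕ := (ftilde d f)^[nε ^ i] k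

/-- `ftildeI d nε f i n = max {fᵢᴹ(16·d·n²), 16·d·n²}`. -/
def ftildeI (d nε : ℕ) (f : ℕ → ℕ) (i : ℕ) (n : ℕ) : ℕ :=
  max (fM (fIt d nε f i) (16 * d * n ^ 2)) (16 * d * n ^ 2)

/-- The recursively defined sequence `k₀ := f̃₀^(nε)(1)`, `k_{i+1} := f̃ᵢ^(nε)(kᵢ)`. -/
def kSeq (d nε : ℕ) (f : ℕ → ℕ) : ℕ → ℕ
  | 0 => (ftildeI d nε f 0)^[nε] 1
  | (i + 1) => (ftildeI d nε f i)^[nε] (kSeq d nε f i)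

/-- `Kdef d τ ε̃ f = k_{i₀}` where `n_ε̃ := ⌈8d⁴/ε̃⁴⌉` and `i₀` is the least `i`
with `τ^(i+1) ≤ ε̃/(6d²)`. -/
noncomputable def Kdef (d : ℕ) (τ εt : ℝ) (f : ℕ → ℕ) : ℕ :=
  kSeq d ⌈8 * (d : ℝ) ^ 4 / εt ^ 4⌉₊ f
    (sInf {i : ℕ | τ ^ (i + 1) ≤ εt / (6 * (d : ℝ) ^ 2)})

/-- `fM0 F n = max {F i : 0 ≤ i ≤ n}` (for functions on ℕ). -/
def fM0 (F : ℕ → ℕ) (n : ℕ) : ℕ := (Finset.range (n + 1)).sup F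

/-- `gTil g n = max {n, g n}`. -/
def gTil (g : ℕ → ℕ) (n : ℕ) : ℕ := max n (g n)

/-- The counterfunction majorant `f(n) := ⌈6d·hᴹ(g̃ᴹ(χ(d·n)))/((1−τ)(ε/2)²)⌉`. -/
noncomputable def fXi (ε τ : ℝ) (g χ h : ℕ → ℕ) (d : ℕ) (n : ℕ) : ℕ :=
  ⌈6 * (d : ℝ) * (fM0 h (fM0 (gTil g) (χ (d * n))) : ℝ) / ((1 - τ) * (ε / 2) ^ 2)⌉₊

/-- The quantity `K = k_{i₀}` occurring in the definition of `Ξ(ε, g, χ, h, d, τ)`,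
with `ε₁ := (1−τ)(ε/2)²/2`, `ε_d := ε₁²/(2d²)` and `ε̃ := ((1−τ)²/(6+8d))·ε_d`. -/
noncomputable def KXi (ε : ℝ) (g χ h : ℕ → ℕ) (d : ℕ) (τ : ℝ) : ℕ :=
  Kdef d τ ((1 - τ) ^ 2 / (6 + 8 * (d : ℝ)) *
    (((1 - τ) * (ε / 2) ^ 2 / 2) ^ 2 / (2 * (d : ℝ) ^ 2))) (fXi ε τ g χ h d)

/-- The rate of metastability `Ξ(ε, g, χ, h, d, τ) := χ(d·k_{i₀})`. -/
noncomputable def XiDef (ε : ℝ) (g χ h : ℕ → ℕ) (d : ℕ) (τ : ℝ) : ℕ :=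
  χ (d * KXi ε g χ h d τ)

/-!
Let `S` be a contraction, such as `G ∘ T`, and let `v t` be the fixed point of `(1 - t) T + t S`.
The points `v (lam n)` and `v (lam (n + 1))` differ by `o (lam (n + 1))`, so the iteration satisfies
a Grönwall recursion and tracks `v (lam n)`; it remains to find a window on which `v` is nearly
constant.

If `S` is a constant `w`, then `v` is Browder's curve: `‖v t - w‖ ^ 2` is bounded and nonincreasing
in `t`, and its decrease controls `‖v s - v t‖ ^ 2`, so the pigeonhole principle yields a window.
A general `S` is reached by Picard iteration: if `w` approximates `v`, then Browder's curve anchored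
at `S w` approximates `v` with an error smaller by the factor `τ`. Nesting the windows obtained in
this way nests the counterfunctions, whence the recursion for `kSeq`.
-/

open Set Function

section ViscosityMap

variable {E : Type*} [NormedAddCommGroup E] [NormedSpace ℝ E] {C : Set E} {T S S' : E → E}
  {κ s t : ℝ} {z z' : ℝ → E}

/-- The regularization `x ↦ (1 - t) T x + t S x` of a nonexpansive map `T` by a contraction `S`.
The hybrid steepest descent step is the case `S = G ∘ T`, Halpern's step that of a constant `S`. -/
def viscosityMap (T S : E → E) (t : ℝ) (x : E) : E := (1 - t) • T x + t • S x

theorem mapsTo_viscosityMap (hC : Convex ℝ C) (hTm : MapsTo T C C) (hSm : MapsTo S C C)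
    (ht : t ∈ Icc (0 : ℝ) 1) : MapsTo (viscosityMap T S t) C C := fun _ hx =>
  hC (hTm hx) (hSm hx) (sub_nonneg.2 ht.2) ht.1 (sub_add_cancel 1 t)

theorem norm_viscosityMap_sub_viscosityMap_le (ht : t ∈ Icc (0 : ℝ) 1) (x y : E) :
    ‖viscosityMap T S t x - viscosityMap T S' t y‖ ≤
      (1 - t) * ‖T x - T y‖ + t * ‖S x - S' y‖ := by
  calc ‖viscosityMap T S t x - viscosityMap T S' t y‖
      = ‖(1 - t) • (T x - T y) + t • (S x - S' y)‖ := by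
        unfold viscosityMap
        congr 1
        module
    _ ≤ ‖(1 - t) • (T x - T y)‖ + ‖t • (S x - S' y)‖ := norm_add_le _ _
    _ = (1 - t) * ‖T x - T y‖ + t * ‖S x - S' y‖ := by
        rw [norm_smul_of_nonneg (sub_nonneg.2 ht.2), norm_smul_of_nonneg ht.1]

theorem norm_viscosityMap_sub_le_mul (hT : ∀ x ∈ C, ∀ y ∈ C, ‖T x - T y‖ ≤ ‖x - y‖)
    (hS : ∀ x ∈ C, ∀ y ∈ C, ‖S x - S y‖ ≤ κ * ‖x - y‖) (ht : t ∈ Icc (0 : ℝ) 1) {x y : E}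
    (hx : x ∈ C) (hy : y ∈ C) :
    ‖viscosityMap T S t x - viscosityMap T S t y‖ ≤ (1 - t * (1 - κ)) * ‖x - y‖ := by
  calc ‖viscosityMap T S t x - viscosityMap T S t y‖
      ≤ (1 - t) * ‖T x - T y‖ + t * ‖S x - S y‖ := norm_viscosityMap_sub_viscosityMap_le ht x y
    _ ≤ (1 - t) * ‖x - y‖ + t * (κ * ‖x - y‖) := add_le_add
        (mul_le_mul_of_nonneg_left (hT x hx y hy) (sub_nonneg.2 ht.2))
        (mul_le_mul_of_nonneg_left (hS x hx y hy) ht.1)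
    _ = (1 - t * (1 - κ)) * ‖x - y‖ := by ring

theorem exists_isFixedPt_viscosityMap (hne : C.Nonempty) (hC : IsComplete C) (hcv : Convex ℝ C)
    (hTm : MapsTo T C C) (hT : ∀ x ∈ C, ∀ y ∈ C, ‖T x - T y‖ ≤ ‖x - y‖) (hSm : MapsTo S C C)
    (hS : ∀ x ∈ C, ∀ y ∈ C, ‖S x - S y‖ ≤ κ * ‖x - y‖) (hκ : κ < 1) (ht : t ∈ Ioc (0 : ℝ) 1) :
    ∃ x ∈ C, IsFixedPt (viscosityMap T S t) x := by
  obtain ⟨x₀, hx₀⟩ := hne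
  have ht' := Ioc_subset_Icc_self ht
  have hmaps := mapsTo_viscosityMap hcv hTm hSm ht'
  have hlip : LipschitzOnWith (1 - t * (1 - κ)).toNNReal (viscosityMap T S t) C :=
    LipschitzOnWith.of_dist_le' fun x hx y hy => by
      simpa only [dist_eq_norm] using norm_viscosityMap_sub_le_mul hT hS ht' hx hy
  have hlt : (1 - t * (1 - κ)).toNNReal < 1 :=
    Real.toNNReal_lt_one.2 (sub_lt_self 1 (mul_pos ht.1 (sub_pos.2 hκ)))
  obtain ⟨x, hx, hfix, -⟩ := ContractingWith.exists_fixedPoint' hC hmaps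
    ⟨hlt, hlip.mapsToRestrict hmaps⟩ hx₀ (edist_ne_top _ _)
  exact ⟨x, hx, hfix⟩

/-- `z` is an implicit viscosity curve in `C`: each `z t`, `0 < t ≤ 1`, is a fixed point of
`viscosityMap T S t`. Browder's curve with anchor `w` is the case `S = fun _ => w`. -/
structure IsViscosityCurve (C : Set E) (T S : E → E) (z : ℝ → E) : Prop where
  mem : ∀ t ∈ Ioc (0 : ℝ) 1, z t ∈ C
  isFixedPt : ∀ t ∈ Ioc (0 : ℝ) 1, IsFixedPt (viscosityMap T S t) (z t)

theorem exists_isViscosityCurve (hne : C.Nonempty) (hC : IsComplete C) (hcv : Convex ℝ C)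
    (hTm : MapsTo T C C) (hT : ∀ x ∈ C, ∀ y ∈ C, ‖T x - T y‖ ≤ ‖x - y‖) (hSm : MapsTo S C C)
    (hS : ∀ x ∈ C, ∀ y ∈ C, ‖S x - S y‖ ≤ κ * ‖x - y‖) (hκ : κ < 1) :
    ∃ z, IsViscosityCurve C T S z := by
  choose! z hz using fun t (ht : t ∈ Ioc (0 : ℝ) 1) =>
    exists_isFixedPt_viscosityMap hne hC hcv hTm hT hSm hS hκ ht
  exact ⟨z, fun t ht => (hz t ht).1, fun t ht => (hz t ht).2⟩

namespace IsViscosityCurve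

theorem norm_sub_le_norm_anchor_sub (hz : IsViscosityCurve C T S z)
    (hz' : IsViscosityCurve C T S' z') (hT : ∀ x ∈ C, ∀ y ∈ C, ‖T x - T y‖ ≤ ‖x - y‖)
    (ht : t ∈ Ioc (0 : ℝ) 1) : ‖z t - z' t‖ ≤ ‖S (z t) - S' (z' t)‖ := by
  have hmap := norm_viscosityMap_sub_viscosityMap_le (T := T) (S := S) (S' := S')
    (Ioc_subset_Icc_self ht) (z t) (z' t)
  rw [(hz.isFixedPt t ht).eq, (hz'.isFixedPt t ht).eq] at hmap
  have hTz := mul_le_mul_of_nonneg_left (hT _ (hz.mem t ht) _ (hz'.mem t ht)) (sub_nonneg.2 ht.2)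
  refine le_of_mul_le_mul_left ?_ ht.1
  linarith

theorem mul_norm_sub_le (hz : IsViscosityCurve C T S z)
    (hT : ∀ x ∈ C, ∀ y ∈ C, ‖T x - T y‖ ≤ ‖x - y‖)
    (hS : ∀ x ∈ C, ∀ y ∈ C, ‖S x - S y‖ ≤ κ * ‖x - y‖) (hs : s ∈ Ioc (0 : ℝ) 1)
    (ht : t ∈ Ioc (0 : ℝ) 1) :
    t * (1 - κ) * ‖z s - z t‖ ≤ |s - t| * ‖S (z s) - T (z s)‖ := by
  have hstep : ‖z s - viscosityMap T S t (z s)‖ = |s - t| * ‖S (z s) - T (z s)‖ := by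
    nth_rw 1 [← (hz.isFixedPt s hs).eq]
    rw [← Real.norm_eq_abs, ← norm_smul]
    unfold viscosityMap
    congr 1
    module
  have hcontr := norm_viscosityMap_sub_le_mul hT hS (Ioc_subset_Icc_self ht)
    (hz.mem s hs) (hz.mem t ht)
  rw [(hz.isFixedPt t ht).eq] at hcontr
  linarith [norm_sub_le_norm_sub_add_norm_sub (z s) (viscosityMap T S t (z s)) (z t)]

end IsViscosityCurve

end ViscosityMap

section BrowderCurve

variable {H : Type*} [NormedAddCommGroup H] [InnerProductSpace ℝ H] {C : Set H} {T S : H → H}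
  {w : H} {s t τ D δ η : ℝ} {v z : ℝ → H}

namespace IsViscosityCurve

theorem inner_sub_anchor_nonpos (hz : IsViscosityCurve C T (fun _ => w) z)
    (hT : ∀ x ∈ C, ∀ y ∈ C, ‖T x - T y‖ ≤ ‖x - y‖) (hs : 0 < s) (hst : s < t) (ht : t ≤ 1) :
    ⟪z t - z s, z t - w⟫ ≤ 0 := by
  have hs' : s ∈ Ioc (0 : ℝ) 1 := ⟨hs, hst.le.trans ht⟩
  have ht' : t ∈ Ioc (0 : ℝ) 1 := ⟨hs.trans hst, ht⟩
  have fixed_sub_anchor : ∀ r ∈ Ioc (0 : ℝ) 1, z r - w = (1 - r) • (T (z r) - w) := fun r hr => by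
    nth_rw 1 [← (hz.isFixedPt r hr).eq]
    unfold viscosityMap
    module
  have hscaled : ((1 - s) * (1 - t)) • (T (z t) - T (z s)) =
      (1 - t) • (z t - z s) + (t - s) • (z t - w) := by
    calc ((1 - s) * (1 - t)) • (T (z t) - T (z s))
        = (1 - s) • ((1 - t) • (T (z t) - w)) - (1 - t) • ((1 - s) • (T (z s) - w)) := by module
      _ = (1 - s) • (z t - w) - (1 - t) • (z s - w) := by
        rw [← fixed_sub_anchor t ht', ← fixed_sub_anchor s hs']
      _ = (1 - t) • (z t - z s) + (t - s) • (z t - w) := by module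
  have hT_inner : ⟪z t - z s, T (z t) - T (z s)⟫ ≤ ‖z t - z s‖ ^ 2 := by
    rw [sq]
    exact (real_inner_le_norm _ _).trans (mul_le_mul_of_nonneg_left
      (hT _ (hz.mem t ht') _ (hz.mem s hs')) (norm_nonneg _))
  have hcoef : 0 ≤ (1 - s) * (1 - t) := mul_nonneg (sub_nonneg.2 hs'.2) (sub_nonneg.2 ht)
  have hT_scaled := mul_le_mul_of_nonneg_left hT_inner hcoef
  have hexpand := congrArg (fun x => ⟪z t - z s, x⟫) hscaled
  simp only [inner_add_right, real_inner_smul_right, real_inner_self_eq_norm_sq] at hexpand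
  have hrest : 0 ≤ s * (1 - t) * ‖z t - z s‖ ^ 2 :=
    mul_nonneg (mul_nonneg hs.le (sub_nonneg.2 ht)) (sq_nonneg _)
  exact nonpos_of_mul_nonpos_right (by linarith) (sub_pos.2 hst)

theorem sq_norm_sub_le_sq_norm_anchor_sub (hz : IsViscosityCurve C T (fun _ => w) z)
    (hT : ∀ x ∈ C, ∀ y ∈ C, ‖T x - T y‖ ≤ ‖x - y‖) (hs : 0 < s) (hst : s ≤ t) (ht : t ≤ 1) :
    ‖z s - z t‖ ^ 2 ≤ ‖z s - w‖ ^ 2 - ‖z t - w‖ ^ 2 := by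
  obtain rfl | hlt := hst.eq_or_lt
  · simp
  have hexpand := norm_sub_sq_real (z t - w) (z t - z s)
  rw [sub_sub_sub_cancel_left, real_inner_comm, norm_sub_rev (z t) (z s)] at hexpand
  linarith [hz.inner_sub_anchor_nonpos hT hs hlt ht]

theorem antitoneOn_sq_norm_sub_anchor (hz : IsViscosityCurve C T (fun _ => w) z)
    (hT : ∀ x ∈ C, ∀ y ∈ C, ‖T x - T y‖ ≤ ‖x - y‖) :
    AntitoneOn (fun t => ‖z t - w‖ ^ 2) (Ioc 0 1) := fun _ hs _ ht hst =>
  sub_nonneg.1 ((sq_nonneg _).trans (hz.sq_norm_sub_le_sq_norm_anchor_sub hT hs.1 hst ht.2))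

/-- Pigeonhole: the nonincreasing function `t ↦ ‖z t - w‖ ^ 2` takes values in `[0, D ^ 2]`, so it
varies by less than `η ^ 2` on one of `N` consecutive windows. -/
theorem exists_window_norm_sub_le (hz : IsViscosityCurve C T (fun _ => w) z)
    (hT : ∀ x ∈ C, ∀ y ∈ C, ‖T x - T y‖ ≤ ‖x - y‖)
    (hD : ∀ t ∈ Ioc (0 : ℝ) 1, ‖z t - w‖ ≤ D) (hη : 0 ≤ η) {N : ℕ} (hN : D ^ 2 < N * η ^ 2)
    {r : ℕ → ℝ} (hr : ∀ i, r i ∈ Ioc (0 : ℝ) 1) :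
    ∃ i < N, ∀ s ∈ Icc (r (i + 1)) (r i), ∀ t ∈ Icc (r (i + 1)) (r i), ‖z s - z t‖ ≤ η := by
  have htotal : ∑ i ∈ Finset.range N, (‖z (r (i + 1)) - w‖ ^ 2 - ‖z (r i) - w‖ ^ 2) <
      ∑ _i ∈ Finset.range N, η ^ 2 := by
    rw [Finset.sum_range_sub (fun i => ‖z (r i) - w‖ ^ 2), Finset.sum_const, Finset.card_range,
      nsmul_eq_mul]
    have := pow_le_pow_left₀ (norm_nonneg _) (hD _ (hr N)) 2
    linarith [sq_nonneg ‖z (r 0) - w‖]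
  obtain ⟨i, hi, hlt⟩ := Finset.exists_lt_of_sum_lt htotal
  refine ⟨i, Finset.mem_range.1 hi, fun s hs t ht => ?_⟩
  wlog hst : s ≤ t generalizing s t
  · rw [norm_sub_rev]
    exact this t ht s hs (le_of_not_ge hst)
  have hs' : s ∈ Ioc (0 : ℝ) 1 := ⟨(hr _).1.trans_le hs.1, hs.2.trans (hr i).2⟩
  have ht' : t ∈ Ioc (0 : ℝ) 1 := ⟨(hr _).1.trans_le ht.1, ht.2.trans (hr i).2⟩
  have hanti := hz.antitoneOn_sq_norm_sub_anchor hT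
  refine (sq_le_sq₀ (norm_nonneg _) hη).1 ?_
  calc ‖z s - z t‖ ^ 2
      ≤ ‖z s - w‖ ^ 2 - ‖z t - w‖ ^ 2 :=
        hz.sq_norm_sub_le_sq_norm_anchor_sub hT hs'.1 hst ht'.2
    _ ≤ ‖z (r (i + 1)) - w‖ ^ 2 - ‖z (r i) - w‖ ^ 2 :=
        sub_le_sub (hanti (hr _) hs' hs.1) (hanti ht' (hr i) ht.2)
    _ ≤ η ^ 2 := hlt.le

end IsViscosityCurve

theorem Icc_one_div_subset_Ioc {k m : ℕ} (hk : 1 ≤ k) (hm : 1 ≤ m) :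
    Icc (1 / (m : ℝ)) (1 / (k : ℝ)) ⊆ Ioc 0 1 := fun _ ht =>
  ⟨(one_div_pos.2 (by positivity)).trans_le ht.1,
    ht.2.trans (div_le_one_of_le₀ (by exact_mod_cast hk) k.cast_nonneg)⟩

namespace IsViscosityCurve

/-- A Picard step: `w'` is taken on Browder's curve anchored at `S w`. -/
theorem exists_subwindow_norm_sub_le (hC : IsComplete C) (hcv : Convex ℝ C)
    (hbd : ∀ x ∈ C, ∀ y ∈ C, ‖x - y‖ ≤ D) (hTm : MapsTo T C C)
    (hT : ∀ x ∈ C, ∀ y ∈ C, ‖T x - T y‖ ≤ ‖x - y‖) (hSm : MapsTo S C C) (hτ : 0 ≤ τ)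
    (hS : ∀ x ∈ C, ∀ y ∈ C, ‖S x - S y‖ ≤ τ * ‖x - y‖) (hv : IsViscosityCurve C T S v)
    (hη : 0 ≤ η) {N : ℕ} (hN : D ^ 2 < N * η ^ 2) {F : ℕ → ℕ} (hF : id ≤ F) {k : ℕ} (hk : 1 ≤ k)
    (hw : w ∈ C) {e : ℝ}
    (hwv : ∀ t ∈ Icc (1 / ((F^[N] k : ℕ) : ℝ)) (1 / (k : ℝ)), ‖w - v t‖ ≤ e) :
    ∃ l, k ≤ l ∧ F l ≤ F^[N] k ∧
      ∃ w' ∈ C, ∀ t ∈ Icc (1 / (F l : ℝ)) (1 / (l : ℝ)), ‖w' - v t‖ ≤ τ * e + η := by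
  have hSw : S w ∈ C := hSm hw
  obtain ⟨z, hz⟩ := exists_isViscosityCurve (S := fun _ => S w) (κ := 0) ⟨w, hw⟩ hC hcv hTm hT
    (fun _ _ => hSw) (fun _ _ _ _ => by simp) one_pos
  have hiter : ∀ i, k ≤ F^[i] k := fun i => id_le_iterate_of_id_le hF i k
  obtain ⟨i, hiN, hstable⟩ := hz.exists_window_norm_sub_le hT
    (fun t ht => hbd _ (hz.mem t ht) _ hSw) hη hN (r := fun i => 1 / ((F^[i] k : ℕ) : ℝ))
    fun i => Icc_one_div_subset_Ioc (hk.trans (hiter i)) (hk.trans (hiter i)) ⟨le_rfl, le_rfl⟩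
  simp only [iterate_succ_apply'] at hstable
  set l := F^[i] k with hl
  have hkl : k ≤ l := hiter i
  have hlF : l ≤ F l := hF l
  have hFl : F l ≤ F^[N] k := by
    rw [hl, ← iterate_succ_apply' F]
    exact monotone_iterate_of_id_le hF hiN k
  have hl1 : 1 ≤ l := hk.trans hkl
  have hwindow := Icc_one_div_subset_Ioc hl1 (hl1.trans hlF)
  have hleft : 1 / (l : ℝ) ∈ Icc (1 / (F l : ℝ)) (1 / (l : ℝ)) :=
    ⟨one_div_le_one_div_of_le (by positivity) (by exact_mod_cast hlF), le_rfl⟩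
  refine ⟨l, hkl, hFl, z (1 / l), hz.mem _ (hwindow hleft), fun t ht => ?_⟩
  have ht_old : t ∈ Icc (1 / ((F^[N] k : ℕ) : ℝ)) (1 / (k : ℝ)) := by
    refine Icc_subset_Icc ?_ ?_ ht <;> refine one_div_le_one_div_of_le ?_ (by exact_mod_cast ‹_›)
    · exact_mod_cast hl1.trans hlF
    · exact_mod_cast hk
  have hzv : ‖z t - v t‖ ≤ τ * e :=
    calc ‖z t - v t‖ ≤ ‖S w - S (v t)‖ := hz.norm_sub_le_norm_anchor_sub hv hT (hwindow ht)
      _ ≤ τ * ‖w - v t‖ := hS _ hw _ (hv.mem t (hwindow ht))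
      _ ≤ τ * e := mul_le_mul_of_nonneg_left (hwv t ht_old) hτ
  calc ‖z (1 / l) - v t‖ ≤ ‖z (1 / l) - z t‖ + ‖z t - v t‖ :=
        norm_sub_le_norm_sub_add_norm_sub _ _ _
    _ ≤ τ * e + η := by linarith [hstable _ hleft t ht]

/-- The induction replaces `F` by `F^[N]`, since every Picard step spends `N` iterations of the
counterfunction; the slack `(1 - τ) * δ` makes the errors sum to at most `δ`. -/
theorem exists_window_norm_sub_le_pow (hne : C.Nonempty) (hC : IsComplete C) (hcv : Convex ℝ C)
    (hbd : ∀ x ∈ C, ∀ y ∈ C, ‖x - y‖ ≤ D) (hTm : MapsTo T C C)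
    (hT : ∀ x ∈ C, ∀ y ∈ C, ‖T x - T y‖ ≤ ‖x - y‖) (hSm : MapsTo S C C) (hτ : τ ∈ Icc (0 : ℝ) 1)
    (hS : ∀ x ∈ C, ∀ y ∈ C, ‖S x - S y‖ ≤ τ * ‖x - y‖) (hv : IsViscosityCurve C T S v)
    (hδ : 0 ≤ δ) {N : ℕ} (hN : D ^ 2 < N * ((1 - τ) * δ) ^ 2) (J : ℕ) {F : ℕ → ℕ} (hF : id ≤ F) :
    ∃ k, 1 ≤ k ∧ F k ≤ F^[N ^ J] 1 ∧
      ∃ w ∈ C, ∀ t ∈ Icc (1 / (F k : ℝ)) (1 / (k : ℝ)), ‖w - v t‖ ≤ τ ^ J * D + δ := by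
  induction J generalizing F with
  | zero =>
    obtain ⟨w, hw⟩ := hne
    refine ⟨1, le_rfl, by simp, w, hw, fun t ht => ?_⟩
    have := hbd w hw _ (hv.mem t (Icc_one_div_subset_Ioc le_rfl (hF 1) ht))
    linarith
  | succ J ih =>
    obtain ⟨k, hk, hFk, w, hw, hwv⟩ := ih (id_le_iterate_of_id_le hF N)
    obtain ⟨l, hkl, hFl, w', hw', hwv'⟩ := hv.exists_subwindow_norm_sub_le hC hcv hbd hTm hT hSm
      hτ.1 hS (mul_nonneg (sub_nonneg.2 hτ.2) hδ) hN hF hk hw hwv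
    refine ⟨l, hk.trans hkl, hFl.trans ?_, w', hw', fun t ht => (hwv' t ht).trans_eq (by ring)⟩
    rwa [← iterate_mul, ← pow_succ'] at hFk

end IsViscosityCurve

end BrowderCurve

section Counterfunctions

variable {d n k i m : ℕ}

theorem le_fM (f : ℕ → ℕ) (hi : 1 ≤ i) (hin : i ≤ n) : f i ≤ fM f n :=
  Finset.le_sup (Finset.mem_Icc.2 ⟨hi, hin⟩)

theorem le_fM0 (f : ℕ → ℕ) (hin : i ≤ n) : f i ≤ fM0 f n :=
  Finset.le_sup (Finset.mem_range_succ_iff.2 hin)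

theorem fM_mono (f : ℕ → ℕ) : Monotone (fM f) := fun _ _ hmn =>
  Finset.sup_mono (Finset.Icc_subset_Icc_right hmn)

theorem le_sixteen_mul_mul_sq (hd : 1 ≤ d) (n : ℕ) : n ≤ 16 * d * n ^ 2 :=
  (Nat.le_self_pow two_ne_zero n).trans (Nat.le_mul_of_pos_left _ (by positivity))

theorem id_le_ftilde (hd : 1 ≤ d) (f : ℕ → ℕ) : id ≤ ftilde d f := fun n =>
  (le_sixteen_mul_mul_sq hd n).trans (le_max_right _ _)

theorem le_ftilde (hd : 1 ≤ d) (f : ℕ → ℕ) (hn : 1 ≤ n) : f n ≤ ftilde d f n :=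
  (le_fM f hn (le_sixteen_mul_mul_sq hd n)).trans (le_max_left _ _)

theorem ftilde_mono (d : ℕ) (f : ℕ → ℕ) : Monotone (ftilde d f) := fun a b hab => by
  have hsq : 16 * d * a ^ 2 ≤ 16 * d * b ^ 2 := by gcongr
  exact max_le_max (fM_mono f hsq) hsq

theorem ftildeI_eq_ftilde (d m : ℕ) (f : ℕ → ℕ) (i : ℕ) :
    ftildeI d m f i = ftilde d (fIt d m f i) := rfl

theorem iterate_mul_ftilde_le (hd : 1 ≤ d) (f : ℕ → ℕ) (hk : 1 ≤ k) (m i j : ℕ) :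
    (ftilde d f)^[m ^ i * j] k ≤ (ftildeI d m f i)^[j] k := by
  rw [ftildeI_eq_ftilde]
  induction j with
  | zero => rfl
  | succ j ih =>
    have hpos : 1 ≤ (ftilde d (fIt d m f i))^[j] k :=
      hk.trans (id_le_iterate_of_id_le (id_le_ftilde hd _) j k)
    rw [mul_add_one, add_comm, iterate_add_apply, iterate_succ_apply']
    exact ((ftilde_mono d f).iterate _ ih).trans (le_ftilde hd (fIt d m f i) hpos)

theorem one_le_kSeq (hd : 1 ≤ d) (m : ℕ) (f : ℕ → ℕ) (i : ℕ) : 1 ≤ kSeq d m f i := by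
  induction i with
  | zero => exact id_le_iterate_of_id_le (id_le_ftilde hd _) m 1
  | succ i ih => exact ih.trans (id_le_iterate_of_id_le (id_le_ftilde hd _) m _)

theorem iterate_ftilde_le_kSeq (hd : 1 ≤ d) (f : ℕ → ℕ) (m i : ℕ) :
    (ftilde d f)^[m ^ (i + 1)] 1 ≤ kSeq d m f (i + 1) := by
  rw [pow_succ]
  exact ((ftilde_mono d f).iterate _ (one_le_kSeq hd m f i)).trans
    (iterate_mul_ftilde_le hd f (one_le_kSeq hd m f i) m i m)

/-- For `1 ≤ i`, `kSeq d m f i` is only known to dominate `m ^ i` iterations of `ftilde`; since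
`N ^ 2 ≤ m`, these suffice for the `N ^ (i + 1)` iterations spent by `i + 1` Picard steps. -/
theorem iterate_ftilde_le_kSeq_of_sq_le (hd : 1 ≤ d) (f : ℕ → ℕ) {N : ℕ} (hN : 1 ≤ N)
    (hNm : N ^ 2 ≤ m) (i : ℕ) : (ftilde d f)^[N ^ (i + 1)] 1 ≤ kSeq d m f i := by
  have iterate_le := monotone_iterate_of_id_le (id_le_ftilde hd f)
  cases i with
  | zero =>
    have hle : N ^ (0 + 1) ≤ m ^ 0 * m := by
      simpa using (Nat.le_self_pow two_ne_zero N).trans hNm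
    exact (iterate_le hle 1).trans (iterate_mul_ftilde_le hd f le_rfl m 0 m)
  | succ i =>
    have hle : N ^ (i + 1 + 1) ≤ m ^ (i + 1) :=
      calc N ^ (i + 1 + 1) ≤ N ^ (2 * (i + 1)) := Nat.pow_le_pow_right hN (by lia)
        _ = (N ^ 2) ^ (i + 1) := pow_mul _ _ _
        _ ≤ m ^ (i + 1) := Nat.pow_le_pow_left hNm _
    exact (iterate_le hle 1).trans (iterate_ftilde_le_kSeq hd f m i)

end Counterfunctions

section Accuracy

variable {τ ε η D εt : ℝ}

theorem accuracy_mem_Ioc (hτ : τ ∈ Ico (0 : ℝ) 1) (hε : ε ∈ Ioc (0 : ℝ) 1) (hD : 1 ≤ D) :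
    (1 - τ) ^ 2 / (6 + 8 * D) * (((1 - τ) * (ε / 2) ^ 2 / 2) ^ 2 / (2 * D ^ 2)) ∈
      Ioc 0 ((1 - τ) * (ε / 2)) := by
  obtain ⟨hε0, hε1⟩ := hε
  have hσ0 : 0 < 1 - τ := sub_pos.2 hτ.2
  have hσ1 : 1 - τ ≤ 1 := sub_le_self 1 hτ.1
  have hmul_sq : (1 - τ) * (ε / 2) ^ 2 ≤ ε / 2 := by
    rw [sq, ← mul_assoc]
    exact mul_le_of_le_one_left (by positivity)
      (mul_le_one₀ hσ1 (by positivity) (by linarith))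
  have hleft : (1 - τ) ^ 2 / (6 + 8 * D) ≤ 1 - τ := by
    rw [div_le_iff₀ (by positivity), sq]
    exact mul_le_mul_of_nonneg_left (by linarith) hσ0.le
  have hright : ((1 - τ) * (ε / 2) ^ 2 / 2) ^ 2 / (2 * D ^ 2) ≤ ε / 2 := by
    have hbase : (1 - τ) * (ε / 2) ^ 2 / 2 ≤ ε / 2 := (half_le_self (by positivity)).trans hmul_sq
    have hD2 : 1 ≤ 2 * D ^ 2 := by linarith [one_le_pow₀ hD (n := 2)]
    calc ((1 - τ) * (ε / 2) ^ 2 / 2) ^ 2 / (2 * D ^ 2)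
        ≤ ((1 - τ) * (ε / 2) ^ 2 / 2) ^ 2 := div_le_self (sq_nonneg _) hD2
      _ ≤ (1 - τ) * (ε / 2) ^ 2 / 2 :=
        pow_le_of_le_one (by positivity) (by linarith) two_ne_zero
      _ ≤ ε / 2 := hbase
  exact ⟨by positivity, mul_le_mul hleft hright (by positivity) hσ0.le⟩

theorem sq_floor_add_one_le_ceil (hεt : 0 < εt) (hεη : εt ≤ η) (hηD : η ≤ D) :
    (⌊D ^ 2 / η ^ 2⌋₊ + 1) ^ 2 ≤ ⌈8 * D ^ 4 / εt ^ 4⌉₊ := by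
  have hη : 0 < η := hεt.trans_le hεη
  have hratio : 1 ≤ D ^ 2 / η ^ 2 := by
    rw [← div_pow]
    exact one_le_pow₀ ((one_le_div₀ hη).2 hηD)
  have hreal : ((⌊D ^ 2 / η ^ 2⌋₊ : ℝ) + 1) ^ 2 ≤ 8 * D ^ 4 / εt ^ 4 := by
    calc ((⌊D ^ 2 / η ^ 2⌋₊ : ℝ) + 1) ^ 2 ≤ (2 * (D ^ 2 / η ^ 2)) ^ 2 := by
          have := Nat.floor_le (zero_le_one.trans hratio)
          gcongr
          linarith
      _ = 4 * D ^ 4 / η ^ 4 := by ring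
      _ ≤ 8 * D ^ 4 / εt ^ 4 := by gcongr; norm_num
  exact_mod_cast hreal.trans (Nat.le_ceil _)

theorem pow_sInf_succ_le (hτ : τ ∈ Ico (0 : ℝ) 1) {x : ℝ} (hx : 0 < x) :
    τ ^ (sInf {i : ℕ | τ ^ (i + 1) ≤ x} + 1) ≤ x := by
  obtain ⟨i, hi⟩ := exists_pow_lt_of_lt_one hx hτ.2
  exact Nat.sInf_mem (s := {i : ℕ | τ ^ (i + 1) ≤ x})
    ⟨i, (pow_le_pow_of_le_one hτ.1 hτ.2.le i.le_succ).trans hi.le⟩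

end Accuracy

section CurveMetastability

variable {H : Type*} [NormedAddCommGroup H] [InnerProductSpace ℝ H] {C : Set H} {T S : H → H}
  {τ δ ε εt : ℝ} {d : ℕ} {v : ℝ → H} {lam : ℕ → ℝ} {h χ : ℕ → ℕ}

namespace IsViscosityCurve

theorem exists_window_le_Kdef (hne : C.Nonempty) (hC : IsComplete C) (hcv : Convex ℝ C)
    (hd : 1 ≤ d) (hbd : ∀ x ∈ C, ∀ y ∈ C, ‖x - y‖ ≤ (d : ℝ)) (hTm : MapsTo T C C)
    (hT : ∀ x ∈ C, ∀ y ∈ C, ‖T x - T y‖ ≤ ‖x - y‖) (hSm : MapsTo S C C) (hτ : τ ∈ Ico (0 : ℝ) 1)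
    (hS : ∀ x ∈ C, ∀ y ∈ C, ‖S x - S y‖ ≤ τ * ‖x - y‖) (hv : IsViscosityCurve C T S v)
    (hδ : δ ∈ Ioc (0 : ℝ) 1) (hεt : εt ∈ Ioc 0 ((1 - τ) * δ)) (f : ℕ → ℕ) :
    ∃ k, 1 ≤ k ∧ ftilde d f k ≤ Kdef d τ εt f ∧
      ∃ w ∈ C, ∀ t ∈ Icc (1 / (ftilde d f k : ℝ)) (1 / (k : ℝ)), ‖w - v t‖ ≤ 2 * δ := by
  have hd' : (1 : ℝ) ≤ d := by exact_mod_cast hd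
  have hη : 0 < (1 - τ) * δ := hεt.1.trans_le hεt.2
  have hηδ : (1 - τ) * δ ≤ δ := mul_le_of_le_one_left hδ.1.le (sub_le_self 1 hτ.1)
  set N := ⌊(d : ℝ) ^ 2 / ((1 - τ) * δ) ^ 2⌋₊ + 1 with hN_def
  have hN : (d : ℝ) ^ 2 < N * ((1 - τ) * δ) ^ 2 := by
    rw [← div_lt_iff₀ (by positivity), hN_def]
    exact_mod_cast Nat.lt_floor_add_one _
  set i₀ := sInf {i : ℕ | τ ^ (i + 1) ≤ εt / (6 * (d : ℝ) ^ 2)}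
  obtain ⟨k, hk, hFk, w, hw, hwv⟩ := hv.exists_window_norm_sub_le_pow hne hC hcv hbd hTm hT hSm
    (Ico_subset_Icc_self hτ) hS hδ.1.le hN (i₀ + 1) (id_le_ftilde hd f)
  have hKdef : (ftilde d f)^[N ^ (i₀ + 1)] 1 ≤ Kdef d τ εt f :=
    iterate_ftilde_le_kSeq_of_sq_le hd f (Nat.le_add_left 1 _)
      (sq_floor_add_one_le_ceil hεt.1 hεt.2 (hηδ.trans (hδ.2.trans hd'))) i₀
  have herror : τ ^ (i₀ + 1) * d ≤ δ := by
    have hi₀ : τ ^ (i₀ + 1) ≤ εt / (6 * (d : ℝ) ^ 2) :=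
      pow_sInf_succ_le hτ (div_pos hεt.1 (by positivity))
    have hd2 : (d : ℝ) ≤ 6 * (d : ℝ) ^ 2 := by nlinarith
    calc τ ^ (i₀ + 1) * d ≤ εt / (6 * (d : ℝ) ^ 2) * (6 * (d : ℝ) ^ 2) :=
          mul_le_mul hi₀ hd2 (by positivity) (div_nonneg hεt.1.le (by positivity))
      _ = εt := div_mul_cancel₀ _ (by positivity)
      _ ≤ δ := hεt.2.trans hηδ
  exact ⟨k, hk, hFk.trans hKdef, w, hw, fun t ht => (hwv t ht).trans (by linarith)⟩

end IsViscosityCurve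

theorem fM0_le_fXi (hd : 1 ≤ d) (hτ : τ ∈ Ico (0 : ℝ) 1) (hε : ε ∈ Ioc (0 : ℝ) 1)
    (g χ h : ℕ → ℕ) (k : ℕ) :
    fM0 h (fM0 (gTil g) (χ (d * k))) ≤ fXi ε τ g χ h d k := by
  obtain ⟨hε0, hε1⟩ := hε
  have hσ : 0 < 1 - τ := sub_pos.2 hτ.2
  have hd' : (1 : ℝ) ≤ d := by exact_mod_cast hd
  have hden : (1 - τ) * (ε / 2) ^ 2 ≤ 1 :=
    mul_le_one₀ (sub_le_self 1 hτ.1) (by positivity) (pow_le_one₀ (by positivity) (by linarith))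
  refine Nat.cast_le.1 (le_trans ?_ (Nat.le_ceil _) : (_ : ℝ) ≤ _)
  rw [le_div_iff₀ (by positivity), mul_comm]
  exact mul_le_mul_of_nonneg_right (by linarith) (Nat.cast_nonneg _)

/-- The minimum makes up for `χ` not being assumed monotone. -/
theorem mem_window_of_mem_Icc_min (hd : 1 ≤ d) (hτ : τ ∈ Ico (0 : ℝ) 1) (hε : ε ∈ Ioc (0 : ℝ) 1)
    (hh : ∀ n, 1 ≤ h n) (hlamh : ∀ n, 1 / (h n : ℝ) ≤ lam n)
    (hχ : ∀ n : ℕ, ∀ i ≥ χ n, lam i ≤ 1 / ((n : ℝ) + 1)) (g : ℕ → ℕ) {k K : ℕ} (hk : 1 ≤ k)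
    (hkK : k ≤ K) {n : ℕ} (hn : n = min (χ (d * k)) (χ (d * K))) {i : ℕ} (hi : i ∈ Icc n (g n)) :
    lam i ∈ Icc (1 / (ftilde d (fXi ε τ g χ h d) k : ℝ)) (1 / (k : ℝ)) := by
  constructor
  · have hle : h i ≤ ftilde d (fXi ε τ g χ h d) k :=
      calc h i ≤ fM0 h (fM0 (gTil g) (χ (d * k))) := le_fM0 h <|
            (hi.2.trans (le_max_right n (g n))).trans (le_fM0 (gTil g) (hn ▸ min_le_left _ _))
        _ ≤ fXi ε τ g χ h d k := fM0_le_fXi hd hτ hε g χ h k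
        _ ≤ ftilde d (fXi ε τ g χ h d) k := le_ftilde hd _ hk
    exact (one_div_le_one_div_of_le (by exact_mod_cast hh i) (by exact_mod_cast hle)).trans
      (hlamh i)
  · have lam_le : ∀ m ≥ k, χ (d * m) ≤ i → lam i ≤ 1 / (k : ℝ) := fun m hm hi => by
      refine (hχ _ i hi).trans (one_div_le_one_div_of_le (by exact_mod_cast hk) ?_)
      have : k ≤ d * m + 1 := (hm.trans (Nat.le_mul_of_pos_left m hd)).trans (Nat.le_succ _)
      exact_mod_cast this
    obtain hmin | hmin := min_le_iff.1 (hn ▸ hi.1)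
    · exact lam_le k le_rfl hmin
    · exact lam_le K hkK hmin

theorem IsViscosityCurve.exists_le_XiDef_norm_sub_le (hne : C.Nonempty) (hC : IsComplete C)
    (hcv : Convex ℝ C) (hd : 1 ≤ d) (hbd : ∀ x ∈ C, ∀ y ∈ C, ‖x - y‖ ≤ (d : ℝ))
    (hTm : MapsTo T C C) (hT : ∀ x ∈ C, ∀ y ∈ C, ‖T x - T y‖ ≤ ‖x - y‖) (hSm : MapsTo S C C)
    (hτ : τ ∈ Ico (0 : ℝ) 1) (hS : ∀ x ∈ C, ∀ y ∈ C, ‖S x - S y‖ ≤ τ * ‖x - y‖)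
    (hv : IsViscosityCurve C T S v) (hh : ∀ n, 1 ≤ h n) (hlamh : ∀ n, 1 / (h n : ℝ) ≤ lam n)
    (hχ : ∀ n : ℕ, ∀ i ≥ χ n, lam i ≤ 1 / ((n : ℝ) + 1)) (hε : ε ∈ Ioc (0 : ℝ) 1) (g : ℕ → ℕ) :
    ∃ n ≤ XiDef ε g χ h d τ, ∃ w, ∀ i ∈ Icc n (g n), ‖w - v (lam i)‖ ≤ ε := by
  obtain ⟨k, hk, hkK, w, -, hwv⟩ := hv.exists_window_le_Kdef hne hC hcv hd hbd hTm hT hSm hτ hS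
    ⟨half_pos hε.1, (half_le_self hε.1.le).trans hε.2⟩
    (accuracy_mem_Ioc hτ hε (Nat.one_le_cast.2 hd)) (fXi ε τ g χ h d)
  refine ⟨_, min_le_right (χ (d * k)) _, w, fun i hi => ?_⟩
  have hmem := mem_window_of_mem_Icc_min hd hτ hε hh hlamh hχ g hk
    ((id_le_ftilde hd _ k).trans hkK) rfl hi
  exact (hwv _ hmem).trans_eq (mul_div_cancel₀ ε two_ne_zero)

end CurveMetastability

section Recursion

variable {a s : ℕ → ℝ} {b D L : ℝ} {N c n : ℕ}

theorem le_add_mul_exp_neg_sum (hD : 0 ≤ D) (ha : ∀ n, a n ≤ 1) (hsN : s N ≤ D + b)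
    (hs : ∀ n ≥ N, s (n + 1) ≤ (1 - a n) * s n + a n * b) (hn : N ≤ n) :
    s n ≤ b + D * Real.exp (-∑ i ∈ Finset.Ico N n, a i) := by
  have hgronwall := discrete_gronwall_prod_general (u := fun n => s n - b) (b := 0)
    (c := fun n => 1 - a n) (n₀ := N) (fun n hn => by simp only [Pi.zero_apply]; linarith [hs n hn])
    (fun n _ => sub_nonneg.2 (ha n)) hn
  have hprod : ∏ i ∈ Finset.Ico N n, (1 - a i) ≤ Real.exp (-∑ i ∈ Finset.Ico N n, a i) := by
    rw [← Finset.sum_neg_distrib, Real.exp_sum]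
    exact Finset.prod_le_prod (fun i _ => sub_nonneg.2 (ha i)) fun i _ =>
      Real.one_sub_le_exp_neg (a i)
  have hprod0 : 0 ≤ ∏ i ∈ Finset.Ico N n, (1 - a i) :=
    Finset.prod_nonneg fun i _ => sub_nonneg.2 (ha i)
  simp only [Pi.zero_apply, zero_mul, Finset.sum_const_zero, add_zero] at hgronwall
  calc s n ≤ b + (s N - b) * ∏ i ∈ Finset.Ico N n, (1 - a i) := by linarith
    _ ≤ b + D * Real.exp (-∑ i ∈ Finset.Ico N n, a i) := by
      gcongr
      linarith

theorem le_sum_Ico_of_add_le_sum_range (ha : ∀ n, a n ∈ Icc (0 : ℝ) 1) (hL : 0 ≤ L)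
    (hc : N + L ≤ ∑ i ∈ Finset.range c, a i) (hn : c ≤ n) :
    N ≤ n ∧ L ≤ ∑ i ∈ Finset.Ico N n, a i := by
  have sum_le : ∀ m, ∑ i ∈ Finset.range m, a i ≤ m := fun m => by
    simpa using Finset.sum_le_card_nsmul (Finset.range m) a 1 fun i _ => (ha i).2
  have hsum : ∑ i ∈ Finset.range c, a i ≤ ∑ i ∈ Finset.range n, a i :=
    Finset.sum_le_sum_of_subset_of_nonneg (Finset.range_mono hn) fun i _ _ => (ha i).1
  have hNn : N ≤ n := by
    have : (N : ℝ) ≤ n := by linarith [sum_le n]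
    exact_mod_cast this
  have hsplit := Finset.sum_range_add_sum_Ico a hNn
  exact ⟨hNn, by linarith [sum_le N]⟩

theorem le_two_mul_of_recursion (ha : ∀ n, a n ∈ Icc (0 : ℝ) 1) (hb : 0 < b) (hbD : b ≤ D)
    (hsN : s N ≤ D) (hs : ∀ n ≥ N, s (n + 1) ≤ (1 - a n) * s n + a n * b)
    (hc : N + Real.log (D / b) ≤ ∑ i ∈ Finset.range c, a i) (hn : c ≤ n) : s n ≤ 2 * b := by
  have hD : 0 < D := hb.trans_le hbD
  obtain ⟨hNn, hlog⟩ := le_sum_Ico_of_add_le_sum_range ha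
    (Real.log_nonneg ((one_le_div₀ hb).2 hbD)) hc hn
  calc s n ≤ b + D * Real.exp (-∑ i ∈ Finset.Ico N n, a i) :=
        le_add_mul_exp_neg_sum hD.le (fun n => (ha n).2) (by linarith) hs hNn
    _ ≤ b + D * Real.exp (-Real.log (D / b)) := by gcongr
    _ = 2 * b := by
      rw [Real.exp_neg, Real.exp_log (div_pos hD hb), inv_div, mul_div_cancel₀ b hD.ne', two_mul]

end Recursion

section ViscosityIteration

variable {E : Type*} [NormedAddCommGroup E] [NormedSpace ℝ E] {C : Set E} {T S : E → E}
  {κ b D s t : ℝ} {v : ℝ → E} {lam : ℕ → ℝ} {u : ℕ → E} {N c n : ℕ}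

theorem viscosity_iterate_mem (hcv : Convex ℝ C) (hTm : MapsTo T C C) (hSm : MapsTo S C C)
    (hlam : ∀ n, lam n ∈ Ioc (0 : ℝ) 1) (hu0 : u 0 ∈ C)
    (hrec : ∀ n, u (n + 1) = viscosityMap T S (lam (n + 1)) (u n)) (n : ℕ) : u n ∈ C := by
  induction n with
  | zero => exact hu0
  | succ n ih =>
    rw [hrec n]
    exact mapsTo_viscosityMap hcv hTm hSm (Ioc_subset_Icc_self (hlam _)) ih

namespace IsViscosityCurve

theorem norm_sub_le_of_div_sq_le (hv : IsViscosityCurve C T S v) (hD : 0 < D)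
    (hbd : ∀ x ∈ C, ∀ y ∈ C, ‖x - y‖ ≤ D) (hTm : MapsTo T C C)
    (hT : ∀ x ∈ C, ∀ y ∈ C, ‖T x - T y‖ ≤ ‖x - y‖) (hSm : MapsTo S C C) (hκ : κ < 1)
    (hS : ∀ x ∈ C, ∀ y ∈ C, ‖S x - S y‖ ≤ κ * ‖x - y‖) (hs : s ∈ Ioc (0 : ℝ) 1)
    (ht : t ∈ Ioc (0 : ℝ) 1) (hst : |s - t| / t ^ 2 ≤ (1 - κ) ^ 2 * b / D) :
    ‖v s - v t‖ ≤ t * (1 - κ) * b := by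
  rw [div_le_div_iff₀ (pow_pos ht.1 2) hD] at hst
  have hvs := hv.mem s hs
  refine le_of_mul_le_mul_left ?_ (mul_pos ht.1 (sub_pos.2 hκ))
  calc t * (1 - κ) * ‖v s - v t‖
      ≤ |s - t| * ‖S (v s) - T (v s)‖ := hv.mul_norm_sub_le hT hS hs ht
    _ ≤ |s - t| * D :=
      mul_le_mul_of_nonneg_left (hbd _ (hSm hvs) _ (hTm hvs)) (abs_nonneg _)
    _ ≤ (1 - κ) ^ 2 * b * t ^ 2 := hst
    _ = t * (1 - κ) * (t * (1 - κ) * b) := by ring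

theorem norm_viscosityMap_sub_le (hv : IsViscosityCurve C T S v)
    (hT : ∀ x ∈ C, ∀ y ∈ C, ‖T x - T y‖ ≤ ‖x - y‖) (hκ : κ ∈ Icc (0 : ℝ) 1)
    (hS : ∀ x ∈ C, ∀ y ∈ C, ‖S x - S y‖ ≤ κ * ‖x - y‖) (ht : t ∈ Ioc (0 : ℝ) 1) {x : E}
    (hx : x ∈ C) (s : ℝ) :
    ‖viscosityMap T S t x - v t‖ ≤ (1 - t * (1 - κ)) * ‖x - v s‖ + ‖v s - v t‖ := by
  have hcoef0 : 0 ≤ t * (1 - κ) := mul_nonneg ht.1.le (sub_nonneg.2 hκ.2)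
  have hcoef1 : t * (1 - κ) ≤ 1 :=
    mul_le_one₀ ht.2 (sub_nonneg.2 hκ.2) (sub_le_self 1 hκ.1)
  calc ‖viscosityMap T S t x - v t‖
      = ‖viscosityMap T S t x - viscosityMap T S t (v t)‖ := by rw [(hv.isFixedPt t ht).eq]
    _ ≤ (1 - t * (1 - κ)) * ‖x - v t‖ :=
      norm_viscosityMap_sub_le_mul hT hS (Ioc_subset_Icc_self ht) hx (hv.mem t ht)
    _ ≤ (1 - t * (1 - κ)) * (‖x - v s‖ + ‖v s - v t‖) :=
      mul_le_mul_of_nonneg_left (norm_sub_le_norm_sub_add_norm_sub _ _ _) (sub_nonneg.2 hcoef1)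
    _ ≤ (1 - t * (1 - κ)) * ‖x - v s‖ + ‖v s - v t‖ := by
      linarith [mul_nonneg hcoef0 (norm_nonneg (v s - v t))]

theorem norm_iterate_sub_le (hv : IsViscosityCurve C T S v) (hb : 0 < b) (hbD : b ≤ D)
    (hbd : ∀ x ∈ C, ∀ y ∈ C, ‖x - y‖ ≤ D) (hTm : MapsTo T C C)
    (hT : ∀ x ∈ C, ∀ y ∈ C, ‖T x - T y‖ ≤ ‖x - y‖) (hSm : MapsTo S C C)
    (hκ : κ ∈ Ico (0 : ℝ) 1) (hS : ∀ x ∈ C, ∀ y ∈ C, ‖S x - S y‖ ≤ κ * ‖x - y‖)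
    (hlam : ∀ n, lam n ∈ Ioc (0 : ℝ) 1)
    (hN : ∀ n ≥ N, |lam n - lam (n + 1)| / lam (n + 1) ^ 2 ≤ (1 - κ) ^ 2 * b / D)
    (hc : (N + Real.log (D / b)) / (1 - κ) ≤ ∑ i ∈ Finset.Icc 1 c, lam i)
    (hu : ∀ n, u n ∈ C) (hrec : ∀ n, u (n + 1) = viscosityMap T S (lam (n + 1)) (u n))
    (hn : c ≤ n) : ‖u n - v (lam n)‖ ≤ 2 * b := by
  have hσ : 0 < 1 - κ := sub_pos.2 hκ.2
  have hstep : ∀ n ≥ N, ‖u (n + 1) - v (lam (n + 1))‖ ≤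
      (1 - lam (n + 1) * (1 - κ)) * ‖u n - v (lam n)‖ + lam (n + 1) * (1 - κ) * b := by
    intro n hn
    rw [hrec n]
    exact (hv.norm_viscosityMap_sub_le hT (Ico_subset_Icc_self hκ) hS (hlam _) (hu n)
      (lam n)).trans (add_le_add_right (hv.norm_sub_le_of_div_sq_le (hb.trans_le hbD) hbd hTm hT
        hSm hκ.2 hS (hlam n) (hlam _) (hN n hn)) _)
  have hsum : N + Real.log (D / b) ≤ ∑ i ∈ Finset.range c, lam (i + 1) * (1 - κ) := by
    rwa [← Finset.sum_mul, ← div_le_iff₀ hσ, Finset.range_eq_Ico, Finset.sum_Ico_add' lam,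
      zero_add, Finset.Ico_add_one_right_eq_Icc]
  exact le_two_mul_of_recursion (s := fun n => ‖u n - v (lam n)‖)
    (fun n => ⟨mul_nonneg (hlam _).1.le hσ.le,
      mul_le_one₀ (hlam _).2 hσ.le (sub_le_self 1 hκ.1)⟩)
    hb hbD (hbd _ (hu N) _ (hv.mem _ (hlam N))) hstep hsum hn

end IsViscosityCurve

end ViscosityIteration

theorem hsdm_single_metastable_general {H : Type*} [NormedAddCommGroup H] [InnerProductSpace ℝ H]
    {d : ℕ} (hd : 1 ≤ d) {C : Set H} (hC : IsComplete C) (hcv : Convex ℝ C)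
    (hbd : ∀ x ∈ C, ∀ y ∈ C, ‖x - y‖ ≤ (d : ℝ)) {T S : H → H} (hTm : MapsTo T C C)
    (hT : ∀ x ∈ C, ∀ y ∈ C, ‖T x - T y‖ ≤ ‖x - y‖) {τ : ℝ} (hτ : τ ∈ Ico (0 : ℝ) 1)
    (hSm : MapsTo S C C) (hS : ∀ x ∈ C, ∀ y ∈ C, ‖S x - S y‖ ≤ τ * ‖x - y‖) {lam : ℕ → ℝ}
    (hlam : ∀ n, lam n ∈ Ioc (0 : ℝ) 1) {h χ : ℕ → ℕ} (hh : ∀ n, 1 ≤ h n)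
    (hlamh : ∀ n, 1 / (h n : ℝ) ≤ lam n) (hχ : ∀ n : ℕ, ∀ i ≥ χ n, lam i ≤ 1 / ((n : ℝ) + 1))
    {ε : ℝ} (hε : ε ∈ Ioc (0 : ℝ) 1) {N c : ℕ}
    (hN : ∀ n ≥ N, |lam n - lam (n + 1)| / lam (n + 1) ^ 2 ≤ (1 - τ) ^ 2 * ε / (6 * (d : ℝ)))
    (hc : (N + Real.log (6 * (d : ℝ) / ε)) / (1 - τ) ≤ ∑ i ∈ Finset.Icc 1 c, lam i)
    {u : ℕ → H} (hu0 : u 0 ∈ C) (hrec : ∀ n, u (n + 1) = viscosityMap T S (lam (n + 1)) (u n))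
    (g : ℕ → ℕ) :
    ∃ n ≤ XiDef (ε / 6) (fun m => m + c + g (m + c)) χ h d τ + c,
      ∀ i ∈ Icc n (n + g n), ∀ j ∈ Icc n (n + g n), ‖u i - u j‖ ≤ ε := by
  obtain ⟨hε0, hε1⟩ := hε
  have hd' : (1 : ℝ) ≤ d := Nat.one_le_cast.2 hd
  obtain ⟨v, hv⟩ := exists_isViscosityCurve ⟨_, hu0⟩ hC hcv hTm hT hSm hS hτ.2
  obtain ⟨m, hm, w, hwv⟩ := hv.exists_le_XiDef_norm_sub_le ⟨_, hu0⟩ hC hcv hd hbd hTm hT hSm hτ hS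
    hh hlamh hχ (ε := ε / 6) ⟨by positivity, by linarith⟩ fun m => m + c + g (m + c)
  have htrack : ∀ i ≥ c, ‖u i - v (lam i)‖ ≤ 2 * (ε / 6) := fun i hi =>
    hv.norm_iterate_sub_le (by positivity) (by linarith) hbd hTm hT hSm hτ hS hlam
      (fun n hn => (hN n hn).trans_eq (by ring)) (by rwa [div_div_eq_mul_div, mul_comm (d : ℝ) 6])
      (viscosity_iterate_mem hcv hTm hSm hlam hu0 hrec) hrec hi
  have hclose : ∀ i ∈ Icc (m + c) (m + c + g (m + c)), ‖u i - w‖ ≤ ε / 2 := fun i hi => by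
    have hvw := hwv i ⟨(Nat.le_add_right m c).trans hi.1, hi.2⟩
    rw [norm_sub_rev] at hvw
    linarith [htrack i ((Nat.le_add_left c m).trans hi.1),
      norm_sub_le_norm_sub_add_norm_sub (u i) (v (lam i)) w]
  refine ⟨m + c, Nat.add_le_add_right hm c, fun i hi j hj => ?_⟩
  have hwj := hclose j hj
  rw [norm_sub_rev] at hwj
  linarith [hclose i hi, norm_sub_le_norm_sub_add_norm_sub (u i) w (u j)]

/-- Rate of metastability for the hybrid steepest descent iteration
`u_{n+1} = (1−λ_{n+1})·T(u_n) + λ_{n+1}·G(T(u_n))` (single nonexpansive mapping). -/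
theorem hsdm_single_metastable
    {H : Type*} [NormedAddCommGroup H] [InnerProductSpace ℝ H] [CompleteSpace H]
    (d : ℕ) (hd : 1 ≤ d)
    (C : Set H) (hne : C.Nonempty) (hcl : IsClosed C) (hcv : Convex ℝ C)
    (hbd : ∀ x ∈ C, ∀ y ∈ C, ‖x - y‖ ≤ (d : ℝ))
    (T : H → H) (hTm : Set.MapsTo T C C)
    (hT : ∀ x ∈ C, ∀ y ∈ C, ‖T x - T y‖ ≤ ‖x - y‖)
    (hfix : ∃ p ∈ C, T p = p)
    (τ : ℝ) (hτ0 : 0 ≤ τ) (hτ1 : τ < 1)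
    (G : H → H) (hGm : Set.MapsTo G C C)
    (hG : ∀ x ∈ C, ∀ y ∈ C, ‖G x - G y‖ ≤ τ * ‖x - y‖)
    (lam : ℕ → ℝ) (hlam : ∀ n, lam n ∈ Set.Ioc (0 : ℝ) 1)
    (h : ℕ → ℕ) (hh : ∀ n, 1 ≤ h n) (hlamh : ∀ n, 1 / (h n : ℝ) ≤ lam n)
    (χ : ℕ → ℕ) (hχ : ∀ n : ℕ, ∀ i ≥ χ n, lam i ≤ 1 / ((n : ℝ) + 1))
    (φ₁ : ℝ → ℕ) (hφ₁ : ∀ x : ℝ, 0 < x → x ≤ ∑ i ∈ Finset.Icc 1 (φ₁ x), lam i)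
    (φ₂ : ℝ → ℕ)
    (hφ₂ : ∀ δ : ℝ, 0 < δ → ∀ n ≥ φ₂ δ, |lam n - lam (n + 1)| / (lam (n + 1)) ^ 2 ≤ δ)
    (u : ℕ → H) (hu0 : u 0 ∈ C)
    (hrec : ∀ n, u (n + 1) = (1 - lam (n + 1)) • T (u n) + lam (n + 1) • G (T (u n)))
    (ε : ℝ) (hε : ε ∈ Set.Ioc (0 : ℝ) 1) (g : ℕ → ℕ) :
    ∃ n ≤ XiDef (ε / 6)
        (fun m => m +
          φ₁ ((↑(φ₂ ((1 - τ) ^ 2 * ε / (6 * (d : ℝ)))) + Real.log (6 * (d : ℝ) / ε)) /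
            (1 - τ)) +
          g (m +
            φ₁ ((↑(φ₂ ((1 - τ) ^ 2 * ε / (6 * (d : ℝ)))) + Real.log (6 * (d : ℝ) / ε)) /
              (1 - τ)))) χ h d τ +
        φ₁ ((↑(φ₂ ((1 - τ) ^ 2 * ε / (6 * (d : ℝ)))) + Real.log (6 * (d : ℝ) / ε)) /
          (1 - τ)),
      ∀ i ∈ Set.Icc n (n + g n), ∀ j ∈ Set.Icc n (n + g n), ‖u i - u j‖ ≤ ε := by
  have hd' : (1 : ℝ) ≤ d := Nat.one_le_cast.2 hd
  have hσ : 0 < 1 - τ := sub_pos.2 hτ1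
  have hlog : 0 < Real.log (6 * (d : ℝ) / ε) :=
    Real.log_pos ((one_lt_div hε.1).2 (by linarith [hε.2]))
  exact hsdm_single_metastable_general hd hcl.isComplete hcv hbd hTm hT ⟨hτ0, hτ1⟩
    (S := fun x => G (T x)) (hGm.comp hTm)
    (fun x hx y hy => (hG _ (hTm hx) _ (hTm hy)).trans
      (mul_le_mul_of_nonneg_left (hT x hx y hy) hτ0))
    hlam hh hlamh hχ hε (hφ₂ _ (div_pos (mul_pos (pow_pos hσ 2) hε.1) (by positivity)))
    (hφ₁ _ (by positivity)) hu0 hrec g
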